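/- Under Independence, Relevance, Monotonicity, and the Double exclusion restriction, the first stage for D∨ satisfies ΔE[D∨|Z] = μ({C1,C2}) + μ({C1,N2}). (Lemma 2.4) -/

import Mathlib

open MeasureTheory ProbabilityTheory

noncomputable section

variable {Ω : Type*} [MeasurableSpace Ω]

/-- Observed first-part treatment: `D1 = D1(1)·Z + D1(0)·(1−Z)`. -/
def obsD1 (Z : Ω → ℝ) (D1 : Bool → Ω → ℝ) (ω : Ω) : ℝ :=
  D1 true ω * Z ω + D1 false ω * (1 - Z ω)

/-- Observed second-part treatment. -/
def obsD2 (Z : Ω → ℝ) (D1 : Bool → Ω → ℝ) (D2 : Bool → Bool → Ω → ℝ) (ω : Ω) : ℝ :=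
  (D2 true true ω * obsD1 Z D1 ω + D2 true false ω * (1 - obsD1 Z D1 ω)) * Z ω +
  (D2 false true ω * obsD1 Z D1 ω + D2 false false ω * (1 - obsD1 Z D1 ω)) * (1 - Z ω)

/-- Summary treatment `D∧ = D1·D2`. -/
def obsDand (Z : Ω → ℝ) (D1 : Bool → Ω → ℝ) (D2 : Bool → Bool → Ω → ℝ) (ω : Ω) : ℝ :=
  obsD1 Z D1 ω * obsD2 Z D1 D2 ω

/-- Summary treatment `D∨ = D1 + D2 − D1·D2`. -/
def obsDor (Z : Ω → ℝ) (D1 : Bool → Ω → ℝ) (D2 : Bool → Bool → Ω → ℝ) (ω : Ω) : ℝ :=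
  obsD1 Z D1 ω + obsD2 Z D1 D2 ω - obsD1 Z D1 ω * obsD2 Z D1 D2 ω

/-- Observed outcome `Y = Σ_{d1,d2} Y(Z,d1,d2)·1{D1=d1, D2=d2}`, written out using that the
observed treatments and the instrument are {0,1}-valued. The first index of `Yp` is `z`, the
second is `d1`, the third is `d2`. -/
def obsY (Z : Ω → ℝ) (D1 : Bool → Ω → ℝ) (D2 : Bool → Bool → Ω → ℝ)
    (Yp : Bool → Bool → Bool → Ω → ℝ) (ω : Ω) : ℝ :=
  (Yp true true true ω * obsD1 Z D1 ω * obsD2 Z D1 D2 ω +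
   Yp true false true ω * (1 - obsD1 Z D1 ω) * obsD2 Z D1 D2 ω +
   Yp true true false ω * obsD1 Z D1 ω * (1 - obsD2 Z D1 D2 ω) +
   Yp true false false ω * (1 - obsD1 Z D1 ω) * (1 - obsD2 Z D1 D2 ω)) * Z ω +
  (Yp false true true ω * obsD1 Z D1 ω * obsD2 Z D1 D2 ω +
   Yp false false true ω * (1 - obsD1 Z D1 ω) * obsD2 Z D1 D2 ω +
   Yp false true false ω * obsD1 Z D1 ω * (1 - obsD2 Z D1 D2 ω) +
   Yp false false false ω * (1 - obsD1 Z D1 ω) * (1 - obsD2 Z D1 D2 ω)) * (1 - Z ω)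

/-- `ΔE[A|Z] := E[A | Z = 1] − E[A | Z = 0]`, expectations under conditional measures. -/
def dE (μ : Measure Ω) (Z A : Ω → ℝ) : ℝ :=
  (∫ ω, A ω ∂(μ[|Z ⁻¹' {1}])) - (∫ ω, A ω ∂(μ[|Z ⁻¹' {0}]))

/-- The full-complier event `{C1,C2}`. -/
def CCev (D1 : Bool → Ω → ℝ) (D2 : Bool → Bool → Ω → ℝ) : Set Ω :=
  {ω | D1 true ω - D1 false ω = 1 ∧ D2 true true ω - D2 false false ω = 1}

/-- The mover event `{C1,N2}`. -/
def CNev (D1 : Bool → Ω → ℝ) (D2 : Bool → Bool → Ω → ℝ) : Set Ω :=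
  {ω | D1 true ω - D1 false ω = 1 ∧ D2 true true ω = 0 ∧ D2 false false ω = 0}

/-- The mover event `{C1,A2}`. -/
def CAev (D1 : Bool → Ω → ℝ) (D2 : Bool → Bool → Ω → ℝ) : Set Ω :=
  {ω | D1 true ω - D1 false ω = 1 ∧ D2 true true ω = 1 ∧ D2 false false ω = 1}

/-- The mover event `{N1,C2}`. -/
def NCev (D1 : Bool → Ω → ℝ) (D2 : Bool → Bool → Ω → ℝ) : Set Ω :=
  {ω | D1 true ω = 0 ∧ D1 false ω = 0 ∧ D2 true false ω - D2 false false ω = 1}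

/-- The mover event `{A1,C2}`. -/
def ACev (D1 : Bool → Ω → ℝ) (D2 : Bool → Bool → Ω → ℝ) : Set Ω :=
  {ω | D1 true ω = 1 ∧ D1 false ω = 1 ∧ D2 true true ω - D2 false true ω = 1}

/-- Conditioning on an event of positive probability determined by `Z` does not change the
expectation of a variable independent of `Z`. -/
theorem integral_cond_of_indep (μ : Measure Ω) [IsProbabilityMeasure μ]
    (Z B : Ω → ℝ) (hZ : Measurable Z) (hB : Measurable B) (h : IndepFun B Z μ)
    (z : ℝ) (hpos : μ (Z ⁻¹' {z}) ≠ 0) :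
    ∫ ω, B ω ∂(μ[|Z ⁻¹' {z}]) = ∫ ω, B ω ∂μ := by
  have hs : MeasurableSet (Z ⁻¹' {z}) := hZ (measurableSet_singleton z)
  have hg : Measurable (Set.indicator ({z} : Set ℝ) (fun _ => (1 : ℝ))) :=
    measurable_const.indicator (measurableSet_singleton z)
  have h2 : IndepFun B (fun ω => Set.indicator ({z} : Set ℝ) (fun _ => (1 : ℝ)) (Z ω)) μ :=
    h.comp measurable_id hg
  have h3 := h2.integral_fun_mul_eq_mul_integral hB.aestronglyMeasurable
    (hg.comp hZ).aestronglyMeasurable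
  have h4 : ∫ ω, Set.indicator ({z} : Set ℝ) (fun _ => (1 : ℝ)) (Z ω) ∂μ
      = (μ (Z ⁻¹' {z})).toReal := by
    have : (fun ω => Set.indicator ({z} : Set ℝ) (fun _ => (1 : ℝ)) (Z ω))
        = Set.indicator (Z ⁻¹' {z}) (fun _ => (1 : ℝ)) := by
      ext ω; simp [Set.indicator]
    rw [this, integral_indicator hs]
    simp [Measure.real]
  have h5 : ∫ ω, B ω * Set.indicator ({z} : Set ℝ) (fun _ => (1 : ℝ)) (Z ω) ∂μ
      = ∫ ω in Z ⁻¹' {z}, B ω ∂μ := by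
    rw [← integral_indicator hs]
    congr 1
    ext ω; simp [Set.indicator]
  rw [h5, h4] at h3
  have hne : (μ (Z ⁻¹' {z})).toReal ≠ 0 :=
    ENNReal.toReal_ne_zero.mpr ⟨hpos, measure_ne_top _ _⟩
  rw [ProbabilityTheory.cond, integral_smul_measure, h3, ENNReal.toReal_inv, smul_eq_mul]
  field_simp

/-- Potential value of `D∨` at instrument value `z`. -/
def potDor (D1 : Bool → ℝ) (D2 : Bool → Bool → ℝ) (z : Bool) : ℝ :=
  D1 z + (D2 z true * D1 z + D2 z false * (1 - D1 z))
    - D1 z * (D2 z true * D1 z + D2 z false * (1 - D1 z))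

theorem stmt_9
    (μ : Measure Ω) [IsProbabilityMeasure μ]
    (Z : Ω → ℝ) (D1 : Bool → Ω → ℝ) (D2 : Bool → Bool → Ω → ℝ)
    (Yp : Bool → Bool → Bool → Ω → ℝ)
    (hZmeas : Measurable Z)
    (hD1meas : ∀ b, Measurable (D1 b))
    (hD2meas : ∀ b b', Measurable (D2 b b'))
    (hYmeas : ∀ z d1 d2, Measurable (Yp z d1 d2))
    (hYint : ∀ z d1 d2, Integrable (Yp z d1 d2) μ)
    (hZ01 : ∀ ω, Z ω = 0 ∨ Z ω = 1)
    (hZpos : 0 < μ (Z ⁻¹' {1})) (hZlt : μ (Z ⁻¹' {1}) < 1)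
    (hD101 : ∀ b ω, D1 b ω = 0 ∨ D1 b ω = 1)
    (hD201 : ∀ b b' ω, D2 b b' ω = 0 ∨ D2 b b' ω = 1)
    (hindep : IndepFun
      (fun ω => ((fun b => D1 b ω), (fun b b' => D2 b b' ω), (fun z d1 d2 => Yp z d1 d2 ω))) Z μ)
    (hrel1 : 0 < dE μ Z (obsD1 Z D1))
    (hrel2 : 0 < dE μ Z (obsD2 Z D1 D2))
    (hrelAnd : 0 < dE μ Z (obsDand Z D1 D2))
    (hrelOr : 0 < dE μ Z (obsDor Z D1 D2))
    (hmono1 : ∀ᵐ ω ∂μ, D1 false ω ≤ D1 true ω)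
    (hmono2 : ∀ᵐ ω ∂μ,
      D2 false true ω * D1 false ω + D2 false false ω * (1 - D1 false ω) ≤
        D2 true true ω * D1 true ω + D2 true false ω * (1 - D1 true ω))
    (hexcl : ∀ d1 d2, ∀ᵐ ω ∂μ, Yp true d1 d2 ω = Yp false d1 d2 ω)
    (hdexcl : ∀ d1, ∀ᵐ ω ∂μ, D2 true d1 ω = D2 false d1 ω) :
    dE μ Z (obsDor Z D1 D2) = (μ (CCev D1 D2)).toReal + (μ (CNev D1 D2)).toReal := by
  classical
  have hs0 : MeasurableSet (Z ⁻¹' {0}) := hZmeas (measurableSet_singleton 0)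
  have hs1 : MeasurableSet (Z ⁻¹' {1}) := hZmeas (measurableSet_singleton 1)
  have hZ0 : μ (Z ⁻¹' {0}) ≠ 0 := by
    intro h0
    have hc : Z ⁻¹' {0} = (Z ⁻¹' {1})ᶜ := by
      ext ω
      rcases hZ01 ω with h | h <;> simp [h]
    rw [hc, prob_compl_eq_zero_iff hs1] at h0
    exact hZlt.ne h0
  let B : Bool → Ω → ℝ := fun z ω => potDor (fun b => D1 b ω) (fun b b' => D2 b b' ω) z
  have hBm : ∀ z, Measurable (B z) := by
    intro z
    have := hD1meas z
    have := hD2meas z true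
    have := hD2meas z false
    simp only [B, potDor]
    fun_prop
  have hBi : ∀ z, IndepFun (B z) Z μ := by
    intro z
    have hm : Measurable (fun p : (Bool → ℝ) × (Bool → Bool → ℝ) ×
        (Bool → Bool → Bool → ℝ) => potDor p.1 p.2.1 z) := by
      simp only [potDor]
      fun_prop
    exact hindep.comp hm measurable_id
  have hB01 : ∀ z ω, B z ω = 0 ∨ B z ω = 1 := by
    intro z ω
    simp only [B, potDor]
    rcases hD101 z ω with h1 | h1 <;> rcases hD201 z true ω with h2 | h2 <;>
      rcases hD201 z false ω with h3 | h3 <;> simp [h1, h2, h3]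
  have hBint : ∀ z, Integrable (B z) μ := by
    intro z
    refine Integrable.of_bound (hBm z).aestronglyMeasurable 1 (ae_of_all _ fun ω => ?_)
    rcases hB01 z ω with h | h <;> simp [h]
  have e1 : ∫ ω, obsDor Z D1 D2 ω ∂(μ[|Z ⁻¹' {1}]) = ∫ ω, B true ω ∂μ := by
    rw [← integral_cond_of_indep μ Z (B true) hZmeas (hBm true) (hBi true) 1 hZpos.ne']
    refine integral_congr_ae ?_
    filter_upwards [ae_cond_mem hs1] with ω hω
    have hz : Z ω = 1 := hω
    simp [obsDor, obsD1, obsD2, B, potDor, hz]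
  have e0 : ∫ ω, obsDor Z D1 D2 ω ∂(μ[|Z ⁻¹' {0}]) = ∫ ω, B false ω ∂μ := by
    rw [← integral_cond_of_indep μ Z (B false) hZmeas (hBm false) (hBi false) 0 hZ0]
    refine integral_congr_ae ?_
    filter_upwards [ae_cond_mem hs0] with ω hω
    have hz : Z ω = 0 := hω
    simp [obsDor, obsD1, obsD2, B, potDor, hz]
  have hD1t := hD1meas true
  have hD1f := hD1meas false
  have hDtt := hD2meas true true
  have hDff := hD2meas false false
  have hCC : MeasurableSet (CCev D1 D2) :=
    (measurableSet_eq_fun (hD1t.sub hD1f) measurable_const).inter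
      (measurableSet_eq_fun (hDtt.sub hDff) measurable_const)
  have hCN : MeasurableSet (CNev D1 D2) :=
    (measurableSet_eq_fun (hD1t.sub hD1f) measurable_const).inter
      ((measurableSet_eq_fun hDtt measurable_const).inter
        (measurableSet_eq_fun hDff measurable_const))
  have i1 : (μ (CCev D1 D2)).toReal
      = ∫ ω, (CCev D1 D2).indicator (fun _ => (1 : ℝ)) ω ∂μ := by
    rw [integral_indicator hCC]; simp [Measure.real]
  have i2 : (μ (CNev D1 D2)).toReal
      = ∫ ω, (CNev D1 D2).indicator (fun _ => (1 : ℝ)) ω ∂μ := by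
    rw [integral_indicator hCN]; simp [Measure.real]
  rw [dE, e1, e0, i1, i2, ← integral_sub (hBint true) (hBint false),
    ← integral_add ((integrable_const 1).indicator hCC) ((integrable_const 1).indicator hCN)]
  refine integral_congr_ae ?_
  filter_upwards [hmono1, hdexcl true, hdexcl false] with ω hm ht hf
  simp only [B, potDor, Set.indicator, CCev, CNev, Set.mem_ofPred_eq, ht, hf]
  rcases hD101 true ω with h1 | h1 <;> rcases hD101 false ω with h2 | h2 <;>
    rcases hD201 false true ω with h3 | h3 <;> rcases hD201 false false ω with h4 | h4 <;>
    rw [h1, h2] at hm <;> simp only [h1, h2, h3, h4] <;> revert hm <;> norm_num
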